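/- Let N ≥ 2 be an integer, K, κ, δ, α, m real constants and n > 0, with γ = (2N−2)/N and θ = (3N−4)/(2N), and let A > 0 stand for α(N). Let Z > 0 and let f : [0,Z) → ℝ be continuously differentiable with f > 0 and f(0) = α > 0, satisfying for all z ∈ (0,Z) the ordinary differential equation γK·f(z)^{γ−2}·f'(z) − 2mκθ·f(z)^{θ−2}·f'(z) + (δA/z^{N−1})·∫₀^z f(s)s^{N−1} ds = (2(N−2)m²/N²)·z. Define a(t) = (mt + n)^{2/N}, ρ(t,r) = f(r/a(t))/a(t)^N and V(t,r) = (a'(t)/a(t))·r. Then for every t with mt + n > 0 and every r with 0 < r < a(t)·Z, the pair (ρ, V) satisfies both the radial mass equation ρ_t + Vρ_r + ρV_r + ((N−1)/r)ρV = 0 and the radial momentum equation ρ(V_t + V V_r) + ∂_r(Kρ^γ) + δρ·(A/r^{N−1})·∫₀^r ρ(t,s)s^{N−1} ds = κ∂_r(ρ^θ)·(((N−1)/r)V + V_r) + κρ^θ·(V_rr + ((N−1)/r)V_r − ((N−1)/r²)V). -/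

import Mathlib

/-!
For a homologous flow `V = (a'/a) r` with `ρ = f(z) / a ^ N`, `z = r / a`, the mass equation is
automatic, the acceleration is `a'' z`, the divergence is `N a'/a`, and the second-order viscous
term vanishes because `V` is linear in `r`. After division by `ρ`, the momentum equation is a sum of
functions of `z` times powers of `a`. If `a' = (2m/N) a ^ (1 - N/2)`, then `a''` is a multiple of
`a ^ (1 - N)`, and the exponents `γ = (2N-2)/N` and `θ = (3N-4)/(2N)` are those for which the
pressure and viscosity terms also scale as `a ^ (1 - N)`, like gravity. Cancelling this factor
leaves the ordinary differential equation for `f` at `z`.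
-/

open Filter Topology

/-- The radial mass equation of the Navier-Stokes-Poisson system in dimension `N` at `(t, r)`. -/
def RadialMassEquation (N : ℕ) (ρ V : ℝ → ℝ → ℝ) (t r : ℝ) : Prop :=
  deriv (fun τ => ρ τ r) t + V t r * deriv (fun s => ρ t s) r
    + ρ t r * deriv (fun s => V t s) r
    + ((N : ℝ) - 1) / r * (ρ t r * V t r) = 0

/-- The radial momentum equation at `(t, r)`, with pressure `K ρ ^ γ`, viscosity `κ ρ ^ θ` and
zero background; `A` is the constant `α(N)` in the Poisson force. -/
def RadialMomentumEquation (N : ℕ) (K κ δ A γ θ : ℝ) (ρ V : ℝ → ℝ → ℝ) (t r : ℝ) : Prop :=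
  ρ t r * (deriv (fun τ => V τ r) t + V t r * deriv (fun s => V t s) r)
    + deriv (fun s => K * ρ t s ^ γ) r
    + δ * ρ t r * (A / r ^ (N - 1)) * ∫ s in (0 : ℝ)..r, ρ t s * s ^ (N - 1)
  = κ * deriv (fun s => ρ t s ^ θ) r
      * (((N : ℝ) - 1) / r * V t r + deriv (fun s => V t s) r)
    + κ * ρ t r ^ θ
      * (deriv (deriv (fun s => V t s)) r
        + ((N : ℝ) - 1) / r * deriv (fun s => V t s) r
        - ((N : ℝ) - 1) / r ^ 2 * V t r)

/-- The ordinary differential equation at `z` for the profile `f` of a self-similar solution. -/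
def ProfileEquation (N : ℕ) (K κ δ A m γ θ : ℝ) (f : ℝ → ℝ) (z : ℝ) : Prop :=
  γ * K * f z ^ (γ - 2) * deriv f z
    - 2 * m * κ * θ * f z ^ (θ - 2) * deriv f z
    + (δ * A / z ^ (N - 1)) * ∫ s in (0 : ℝ)..z, f s * s ^ (N - 1)
  = (2 * ((N : ℝ) - 2) * m ^ 2 / (N : ℝ) ^ 2) * z

/-- The density with profile `f`, dilated by the scale factor `a` so as to preserve total mass
in dimension `N`. -/
noncomputable def selfSimilarDensity (N : ℕ) (f a : ℝ → ℝ) (t r : ℝ) : ℝ :=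
  f (r / a t) / a t ^ N

/-- The velocity field whose particle paths are the multiples of the scale factor `a`. -/
noncomputable def homologousVelocity (a : ℝ → ℝ) (t r : ℝ) : ℝ :=
  deriv a t / a t * r

section ScaleFactor

variable {a : ℝ → ℝ} {t : ℝ}

theorem hasDerivAt_deriv_of_deriv_eq_rpow {c q : ℝ}
    (ha : ∀ᶠ τ in 𝓝 t, HasDerivAt a (c * a τ ^ q) τ) (hat : 0 < a t) :
    HasDerivAt (deriv a) (c ^ 2 * q * a t ^ (2 * q - 1)) t := by
  have hderiv : deriv a =ᶠ[𝓝 t] fun τ => c * a τ ^ q := ha.mono fun _ h => h.deriv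
  have hrhs : HasDerivAt (fun τ => c * a τ ^ q) (c * (c * a t ^ q * q * a t ^ (q - 1))) t :=
    (ha.self_of_nhds.rpow_const (Or.inl hat.ne')).const_mul c
  refine (hrhs.congr_of_eventuallyEq hderiv).congr_deriv ?_
  rw [show 2 * q - 1 = q + (q - 1) by ring, Real.rpow_add hat]
  ring

-- The derivative is written through the value of the function, so that the power law is seen to
-- solve an autonomous equation `a' = c a ^ q`.
theorem hasDerivAt_affine_rpow {m n p : ℝ} (hp : p ≠ 0) (ht : 0 < m * t + n) :
    HasDerivAt (fun τ => (m * τ + n) ^ p) (p * m * ((m * t + n) ^ p) ^ (1 - p⁻¹)) t := by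
  have haffine : HasDerivAt (fun τ => m * τ + n) m t := by
    simpa using ((hasDerivAt_id t).const_mul m).add_const n
  refine (haffine.rpow_const (p := p) (Or.inl ht.ne')).congr_deriv ?_
  rw [← Real.rpow_mul ht.le, show p * (1 - p⁻¹) = p - 1 by field_simp]
  ring

theorem eventually_hasDerivAt_affine_rpow {m n p : ℝ} (hp : p ≠ 0) (ht : 0 < m * t + n) :
    ∀ᶠ τ in 𝓝 t, HasDerivAt (fun τ => (m * τ + n) ^ p)
      (p * m * ((m * τ + n) ^ p) ^ (1 - p⁻¹)) τ := by
  have hcont : ContinuousAt (fun τ => m * τ + n) t := by fun_prop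
  exact (hcont.eventually (lt_mem_nhds ht)).mono fun _ hτ => hasDerivAt_affine_rpow hp hτ

end ScaleFactor

section HomologousFlow

variable {N : ℕ} {f a : ℝ → ℝ} {t r : ℝ}

theorem deriv_homologousVelocity_space (a : ℝ → ℝ) (t : ℝ) :
    deriv (fun s => homologousVelocity a t s) = fun _ => deriv a t / a t := by
  ext s
  exact (hasDerivAt_const_mul (deriv a t / a t)).deriv

theorem homologousVelocity_acceleration (ha : DifferentiableAt ℝ a t)
    (ha' : DifferentiableAt ℝ (deriv a) t) (hat : a t ≠ 0) (r : ℝ) :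
    deriv (fun τ => homologousVelocity a τ r) t
      + homologousVelocity a t r * deriv (fun s => homologousVelocity a t s) r
    = deriv (deriv a) t * (r / a t) := by
  have htime : deriv (fun τ => homologousVelocity a τ r) t
      = (deriv (deriv a) t * a t - deriv a t * deriv a t) / a t ^ 2 * r :=
    ((ha'.hasDerivAt.div ha.hasDerivAt hat).mul_const r).deriv
  rw [htime, deriv_homologousVelocity_space, homologousVelocity]
  field_simp
  ring

theorem homologousVelocity_divergence (N : ℕ) (a : ℝ → ℝ) (t : ℝ) (hr : r ≠ 0) :
    ((N : ℝ) - 1) / r * homologousVelocity a t r + deriv (fun s => homologousVelocity a t s) r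
      = N * (deriv a t / a t) := by
  rw [deriv_homologousVelocity_space, homologousVelocity]
  field_simp
  ring

theorem homologousVelocity_viscous_term_eq_zero (N : ℕ) (a : ℝ → ℝ) (t : ℝ) (hr : r ≠ 0) :
    deriv (deriv (fun s => homologousVelocity a t s)) r
      + ((N : ℝ) - 1) / r * deriv (fun s => homologousVelocity a t s) r
      - ((N : ℝ) - 1) / r ^ 2 * homologousVelocity a t r = 0 := by
  rw [deriv_homologousVelocity_space, deriv_const, homologousVelocity]
  field_simp
  ring

theorem hasDerivAt_selfSimilarDensity_space (hf : DifferentiableAt ℝ f (r / a t)) :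
    HasDerivAt (fun s => selfSimilarDensity N f a t s)
      (deriv f (r / a t) / a t ^ (N + 1)) r := by
  have hz : HasDerivAt (fun s => s / a t) (1 / a t) r := (hasDerivAt_id r).div_const _
  refine ((hf.hasDerivAt.comp r hz).div_const (a t ^ N)).congr_deriv ?_
  ring

theorem hasDerivAt_selfSimilarDensity_time (ha : DifferentiableAt ℝ a t) (hat : a t ≠ 0)
    (hf : DifferentiableAt ℝ f (r / a t)) :
    HasDerivAt (fun τ => selfSimilarDensity N f a τ r)
      (-(deriv a t / a t) * (r / a t * deriv f (r / a t) + N * f (r / a t)) / a t ^ N) t := by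
  have hz : HasDerivAt (fun τ => r / a τ) (-(r * deriv a t) / a t ^ 2) t := by
    refine ((hasDerivAt_const t r).div ha.hasDerivAt hat).congr_deriv ?_
    rw [zero_mul, zero_sub]
  have hpow : HasDerivAt (fun τ => a τ ^ N) (N * a t ^ N * (deriv a t / a t)) t := by
    refine (ha.hasDerivAt.pow N).congr_deriv ?_
    rcases N with _ | k
    · simp
    · rw [Nat.add_sub_cancel, pow_succ]
      field_simp
  refine ((hf.hasDerivAt.comp t hz).div hpow (pow_ne_zero N hat)).congr_deriv ?_
  simp only [Function.comp_apply]
  field_simp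
  ring

theorem radialMassEquation_selfSimilar (ha : DifferentiableAt ℝ a t) (hat : a t ≠ 0)
    (hr : r ≠ 0) (hf : DifferentiableAt ℝ f (r / a t)) :
    RadialMassEquation N (selfSimilarDensity N f a) (homologousVelocity a) t r := by
  rw [RadialMassEquation, (hasDerivAt_selfSimilarDensity_time ha hat hf).deriv,
    (hasDerivAt_selfSimilarDensity_space hf).deriv, deriv_homologousVelocity_space,
    selfSimilarDensity, homologousVelocity]
  field_simp
  ring

theorem deriv_selfSimilarDensity_rpow (p : ℝ) (hat : 0 < a t)
    (hf : DifferentiableAt ℝ f (r / a t)) (hfz : 0 < f (r / a t)) :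
    deriv (fun s => selfSimilarDensity N f a t s ^ p) r
      = selfSimilarDensity N f a t r * (p * f (r / a t) ^ (p - 2) * deriv f (r / a t))
        * a t ^ (-N * (p - 1) - 1) := by
  have hρ : 0 < selfSimilarDensity N f a t r := div_pos hfz (pow_pos hat N)
  have hpow : selfSimilarDensity N f a t r ^ (p - 2)
      = f (r / a t) ^ (p - 2) * a t ^ (-N * (p - 2)) := by
    rw [selfSimilarDensity, Real.div_rpow hfz.le (pow_nonneg hat.le N), ← Real.rpow_natCast,
      ← Real.rpow_mul hat.le, neg_mul, Real.rpow_neg hat.le, div_eq_mul_inv]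
  have hscale : a t ^ (-N * (p - 1) - 1) * a t ^ (N + 1) = a t ^ (-N * (p - 2)) := by
    rw [← Real.rpow_natCast (a t), ← Real.rpow_add hat]
    congr 1
    push_cast
    ring
  rw [((hasDerivAt_selfSimilarDensity_space hf).rpow_const (p := p) (Or.inl hρ.ne')).deriv,
    show p - 1 = p - 2 + 1 by ring, Real.rpow_add_one hρ.ne', hpow, ← hscale,
    show p - 2 + 1 = p - 1 by ring]
  field_simp

theorem integral_selfSimilarDensity (hN : N ≠ 0) (hat : a t ≠ 0) (r : ℝ) :
    ∫ s in (0 : ℝ)..r, selfSimilarDensity N f a t s * s ^ (N - 1)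
      = ∫ s in (0 : ℝ)..r / a t, f s * s ^ (N - 1) := by
  have hrescale : ∀ s, selfSimilarDensity N f a t s * s ^ (N - 1)
      = (a t)⁻¹ * (f (s / a t) * (s / a t) ^ (N - 1)) := fun s => by
    rw [selfSimilarDensity, div_pow, ← mul_pow_sub_one hN (a t)]
    field_simp
  simp only [hrescale]
  rw [intervalIntegral.integral_const_mul,
    intervalIntegral.integral_comp_div (fun x => f x * x ^ (N - 1)) hat, zero_div, smul_eq_mul,
    inv_mul_cancel_left₀ hat]

theorem gravity_selfSimilarDensity (hN : N ≠ 0) (hat : 0 < a t) (A r : ℝ) :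
    A / r ^ (N - 1) * ∫ s in (0 : ℝ)..r, selfSimilarDensity N f a t s * s ^ (N - 1)
      = a t ^ (1 - (N : ℝ))
        * (A / (r / a t) ^ (N - 1) * ∫ s in (0 : ℝ)..r / a t, f s * s ^ (N - 1)) := by
  have hscale : a t ^ (1 - (N : ℝ)) = (a t ^ (N - 1))⁻¹ := by
    rw [← Real.rpow_natCast, ← Real.rpow_neg hat.le, Nat.cast_pred (Nat.pos_of_ne_zero hN),
      neg_sub]
  rw [integral_selfSimilarDensity hN hat.ne', hscale, div_pow]
  field_simp

theorem radialMomentumEquation_selfSimilar_iff (hN : N ≠ 0) (K κ δ A γ θ : ℝ)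
    (ha : DifferentiableAt ℝ a t) (ha' : DifferentiableAt ℝ (deriv a) t) (hat : 0 < a t)
    (hr : r ≠ 0) (hf : DifferentiableAt ℝ f (r / a t)) (hfz : 0 < f (r / a t)) :
    RadialMomentumEquation N K κ δ A γ θ (selfSimilarDensity N f a) (homologousVelocity a) t r ↔
      deriv (deriv a) t * (r / a t)
        + K * (γ * f (r / a t) ^ (γ - 2) * deriv f (r / a t)) * a t ^ (-N * (γ - 1) - 1)
        + δ * (a t ^ (1 - (N : ℝ))
          * (A / (r / a t) ^ (N - 1) * ∫ s in (0 : ℝ)..r / a t, f s * s ^ (N - 1)))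
      = κ * (θ * f (r / a t) ^ (θ - 2) * deriv f (r / a t)) * a t ^ (-N * (θ - 1) - 1)
        * (N * (deriv a t / a t)) := by
  have hρ : selfSimilarDensity N f a t r ≠ 0 := (div_pos hfz (pow_pos hat N)).ne'
  rw [RadialMomentumEquation, homologousVelocity_acceleration ha ha' hat.ne',
    homologousVelocity_divergence N a t hr, homologousVelocity_viscous_term_eq_zero N a t hr,
    deriv_const_mul_field, deriv_selfSimilarDensity_rpow γ hat hf hfz,
    deriv_selfSimilarDensity_rpow θ hat hf hfz, mul_assoc (δ * _),
    gravity_selfSimilarDensity hN hat]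
  refine (Eq.congr ?_ ?_).trans (mul_right_inj' hρ) <;> ring

theorem radialMomentumEquation_iff_profileEquation (hN : N ≠ 0) (K κ δ A : ℝ) {m γ θ : ℝ}
    (hγ : γ = (2 * (N : ℝ) - 2) / N) (hθ : θ = (3 * (N : ℝ) - 4) / (2 * N))
    (ha : ∀ᶠ τ in 𝓝 t, HasDerivAt a (2 / N * m * a τ ^ (1 - (N : ℝ) / 2)) τ) (hat : 0 < a t)
    (hr : r ≠ 0) (hf : DifferentiableAt ℝ f (r / a t)) (hfz : 0 < f (r / a t)) :
    RadialMomentumEquation N K κ δ A γ θ (selfSimilarDensity N f a) (homologousVelocity a) t r ↔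
      ProfileEquation N K κ δ A m γ θ f (r / a t) := by
  have hN' : (N : ℝ) ≠ 0 := Nat.cast_ne_zero.2 hN
  have ha' := hasDerivAt_deriv_of_deriv_eq_rpow ha hat
  have haccel : deriv (deriv a) t
      = -(2 * ((N : ℝ) - 2) * m ^ 2 / N ^ 2) * a t ^ (1 - (N : ℝ)) := by
    rw [ha'.deriv, show 2 * (1 - (N : ℝ) / 2) - 1 = 1 - N by ring]
    field_simp
    ring
  have hpressure : -(N : ℝ) * (γ - 1) - 1 = 1 - N := by
    rw [hγ]
    field_simp
    ring
  have hviscosity : a t ^ (-(N : ℝ) * (θ - 1) - 1) * (N * (deriv a t / a t))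
      = 2 * m * a t ^ (1 - (N : ℝ)) := by
    have hexp : 1 - (N : ℝ) = -N * (θ - 1) - 1 + (1 - N / 2) - 1 := by
      rw [hθ]
      field_simp
      ring
    rw [ha.self_of_nhds.deriv, hexp, Real.rpow_sub_one hat.ne' (_ + _), Real.rpow_add hat]
    field_simp
  rw [radialMomentumEquation_selfSimilar_iff hN K κ δ A γ θ ha.self_of_nhds.differentiableAt
      ha'.differentiableAt hat hr hf hfz, mul_assoc (κ * _), hviscosity, haccel, hpressure,
    ProfileEquation]
  refine Iff.trans ?_ (mul_right_inj' (Real.rpow_pos_of_pos hat (1 - (N : ℝ))).ne')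
  constructor <;> intro h <;> linear_combination h

end HomologousFlow

theorem stmt_7_general (N : ℕ) (hN : N ≠ 0) (K κ δ m n A γ θ Z : ℝ)
    (hγ : γ = (2 * (N : ℝ) - 2) / N) (hθ : θ = (3 * (N : ℝ) - 4) / (2 * N))
    (f : ℝ → ℝ) (hf : ContDiffOn ℝ 1 f (Set.Ico 0 Z))
    (hfpos : ∀ z ∈ Set.Ioo (0 : ℝ) Z, 0 < f z)
    (a : ℝ → ℝ) (ha : ∀ t, a t = (m * t + n) ^ ((2 : ℝ) / N))
    (ρ V : ℝ → ℝ → ℝ)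
    (hρ : ∀ t r, ρ t r = f (r / a t) / (a t) ^ N)
    (hV : ∀ t r, V t r = (deriv a t / a t) * r)
    (t : ℝ) (ht : 0 < m * t + n) (r : ℝ) (hz : r / a t ∈ Set.Ioo 0 Z) :
    RadialMassEquation N ρ V t r ∧
      (RadialMomentumEquation N K κ δ A γ θ ρ V t r ↔
        ProfileEquation N K κ δ A m γ θ f (r / a t)) := by
  obtain rfl : ρ = selfSimilarDensity N f a := funext₂ hρ
  obtain rfl : V = homologousVelocity a := funext₂ hV
  have hat : 0 < a t := ha t ▸ Real.rpow_pos_of_pos ht _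
  have hr : r ≠ 0 := ((div_pos_iff_of_pos_right hat).1 hz.1).ne'
  have hscale : ∀ᶠ τ in 𝓝 t, HasDerivAt a (2 / N * m * a τ ^ (1 - (N : ℝ) / 2)) τ := by
    have hp : (2 : ℝ) / N ≠ 0 := div_ne_zero two_ne_zero (Nat.cast_ne_zero.2 hN)
    simpa only [← ha, inv_div] using eventually_hasDerivAt_affine_rpow hp ht
  have hfz : DifferentiableAt ℝ f (r / a t) :=
    (hf.contDiffAt (Ico_mem_nhds hz.1 hz.2)).differentiableAt one_ne_zero
  exact ⟨radialMassEquation_selfSimilar hscale.self_of_nhds.differentiableAt hat.ne' hr hfz,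
    radialMomentumEquation_iff_profileEquation hN K κ δ A hγ hθ hscale hat hr hfz (hfpos _ hz)⟩

/-- Theorem 1 (1b): with Λ = 0, γ = (2N−2)/N, θ = (3N−4)/(2N) and a(t) = (mt + n)^{2/N},
the separable pair ρ(t,r) = f(r/a(t))/a(t)^N, V(t,r) = (a'(t)/a(t))·r solves the radial
mass and momentum equations of the Navier-Stokes-Poisson system, provided f solves
the stated ordinary differential equation. -/
theorem stmt_7 (N : ℕ) (hN : 2 ≤ N) (K κ δ α m n A γ θ Z : ℝ)
    (hn : 0 < n) (hA : 0 < A) (hZ : 0 < Z) (hα : 0 < α)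
    (hγ : γ = (2 * (N : ℝ) - 2) / N) (hθ : θ = (3 * (N : ℝ) - 4) / (2 * N))
    (f : ℝ → ℝ) (hf : ContDiffOn ℝ 1 f (Set.Ico 0 Z))
    (hfpos : ∀ z ∈ Set.Ico (0:ℝ) Z, 0 < f z) (hf0 : f 0 = α)
    (hode : ∀ z ∈ Set.Ioo (0:ℝ) Z,
      γ * K * f z ^ (γ - 2) * deriv f z
        - 2 * m * κ * θ * f z ^ (θ - 2) * deriv f z
        + (δ * A / z ^ (N - 1)) * ∫ s in (0:ℝ)..z, f s * s ^ (N - 1)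
        = (2 * ((N : ℝ) - 2) * m ^ 2 / (N : ℝ) ^ 2) * z)
    (a : ℝ → ℝ) (ha : ∀ t, a t = (m * t + n) ^ ((2 : ℝ) / N))
    (ρ V : ℝ → ℝ → ℝ)
    (hρ : ∀ t r, ρ t r = f (r / a t) / (a t) ^ N)
    (hV : ∀ t r, V t r = (deriv a t / a t) * r) :
    ∀ t : ℝ, 0 < m * t + n → ∀ r : ℝ, 0 < r → r < a t * Z →
      (deriv (fun τ => ρ τ r) t + V t r * deriv (fun s => ρ t s) r
          + ρ t r * deriv (fun s => V t s) r
          + ((N : ℝ) - 1) / r * (ρ t r * V t r) = 0)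
      ∧ (ρ t r * (deriv (fun τ => V τ r) t + V t r * deriv (fun s => V t s) r)
          + deriv (fun s => K * ρ t s ^ γ) r
          + δ * ρ t r * (A / r ^ (N - 1)) * ∫ s in (0:ℝ)..r, ρ t s * s ^ (N - 1)
        = κ * deriv (fun s => ρ t s ^ θ) r
              * (((N : ℝ) - 1) / r * V t r + deriv (fun s => V t s) r)
          + κ * ρ t r ^ θ
              * (deriv (deriv (fun s => V t s)) r
                + ((N : ℝ) - 1) / r * deriv (fun s => V t s) r
                - ((N : ℝ) - 1) / r ^ 2 * V t r)) := by
  intro t ht r hr hrZ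
  have hat : 0 < a t := ha t ▸ Real.rpow_pos_of_pos ht _
  have hz : r / a t ∈ Set.Ioo 0 Z := ⟨div_pos hr hat, (div_lt_iff₀' hat).2 hrZ⟩
  have ⟨hmass, hmomentum⟩ := stmt_7_general N (by omega) K κ δ m n A γ θ Z hγ hθ f hf
    (fun x hx => hfpos x ⟨hx.1.le, hx.2⟩) a ha ρ V hρ hV t ht r hz
  exact ⟨hmass, hmomentum.2 (hode _ hz)⟩
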